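/- For every α≥1 there exists a constant K≥1 with the following property. Let X be a complex Banach space having property (α) with constant at most α, let A = ⊕_{k=1}^N M_{n_k}(ℂ) be a finite dimensional C*-algebra (norm = maximum of the block operator norms), and let w: A→B(X) be a bounded unital algebra homomorphism. Then w is matricially R-bounded with ‖w‖_{mat,R} ≤ K‖w‖²; that is, for every n, every matrix [a_{ij}]∈M_n(A) and all x_1,…,x_n∈X: (2^{-n}Σ_{ε∈{±1}^n}‖Σ_{i,j=1}^n ε_i w(a_{ij})x_j‖²)^{1/2} ≤ K‖w‖²·‖[a_{ij}]‖_{M_n(A)}·(2^{-n}Σ_{ε∈{±1}^n}‖Σ_{j=1}^n ε_j x_j‖²)^{1/2}, where ‖[a_{ij}]‖_{M_n(A)} is the C*-norm of M_n(A) ≅ ⊕_{k=1}^N M_{n·n_k}(ℂ), i.e. the maximum over k of the operator norms of the n·n_k × n·n_k block matrices. -/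

import Mathlib

noncomputable section

/-- The sign `±1` (as a complex scalar) associated to a boolean. -/
def sgn (b : Bool) : ℂ := if b then 1 else -1

/-- Rademacher average `(2^{-n} Σ_{ε ∈ {±1}^n} ‖Σ_k ε_k x_k‖²)^{1/2}`. -/
def radNorm {X : Type*} [NormedAddCommGroup X] [NormedSpace ℂ X] {n : ℕ}
    (x : Fin n → X) : ℝ :=
  Real.sqrt ((∑ ε : Fin n → Bool, ‖∑ k, sgn (ε k) • x k‖ ^ 2) / 2 ^ n)

/-- Doubly indexed Rademacher average
`(2^{-n-m} Σ_{ε ∈ {±1}^n, η ∈ {±1}^m} ‖Σ_{i,j} ε_i η_j x_{ij}‖²)^{1/2}`. -/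
def radNorm2 {X : Type*} [NormedAddCommGroup X] [NormedSpace ℂ X] {n m : ℕ}
    (x : Fin n → Fin m → X) : ℝ :=
  Real.sqrt ((∑ ε : Fin n → Bool, ∑ η : Fin m → Bool,
    ‖∑ i, ∑ j, (sgn (ε i) * sgn (η j)) • x i j‖ ^ 2) / 2 ^ (n + m))

/-- `X` has property (α) with constant `α`. -/
def PropAlphaWith (X : Type*) [NormedAddCommGroup X] [NormedSpace ℂ X]
    (α : ℝ) : Prop :=
  ∀ (n m : ℕ) (x : Fin n → Fin m → X) (t : Fin n → Fin m → ℂ),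
    (∀ i j, ‖t i j‖ ≤ 1) →
      radNorm2 (fun i j => t i j • x i j) ≤ α * radNorm2 x

/-- The operator norm of a complex matrix, acting on the finite dimensional
ℓ²-space. -/
def matOpNorm {p : Type*} [Fintype p] [DecidableEq p] (a : Matrix p p ℂ) : ℝ :=
  ‖Matrix.toEuclideanCLM (𝕜 := ℂ) a‖
universe u

/-!
Averaging over random signs, property (α) makes single and double Rademacher averages comparable.
Together with the central limit theorem this bounds Gaussian averages by Rademacher averages, and
the converse bound holds in every space. Gaussian averages are rotation invariant, so unitary
scalar matrices, and hence all scalar matrices by decomposition into four unitaries, act boundedly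
on Rademacher averages.

For a homomorphism `w`, let `u` run through the unitaries obtained from discrete Fourier matrices
in each block by random changes of sign of the rows and columns. Each `w u` is bounded by `‖w‖`,
with inverse `w u*`, so `‖x‖` is comparable to the average of `‖w u x‖`. By property (α) this is a
double Rademacher average of the vectors `w e_{pq} x`, where `e_{pq}` are suitably scaled matrix
units. Since `e_{pq} a = ∑ r, a_{qr} e_{pr}`, a matrix `[aᵢⱼ]` over the algebra acts on these
averages as a scalar matrix of the same norm; the two comparisons with `‖x‖` account for `‖w‖²`.
-/

open scoped BigOperators

section Signs

lemma norm_sgn (b : Bool) : ‖sgn b‖ = 1 := by cases b <;> simp [sgn]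

lemma star_sgn (b : Bool) : star (sgn b) = sgn b := by cases b <;> simp [sgn]

lemma sgn_mul_self (b : Bool) : sgn b * sgn b = 1 := by cases b <;> simp [sgn]

lemma sgn_beq (a b : Bool) : sgn (a == b) = sgn a * sgn b := by
  cases a <;> cases b <;> simp [sgn]

lemma re_sgn_smul {X : Type*} [NormedAddCommGroup X] [NormedSpace ℂ X] (b : Bool) (x : X) :
    (sgn b).re • x = sgn b • x := by cases b <;> simp [sgn]

lemma expect_flip {ι M : Type*} [Fintype ι] [DecidableEq ι] [AddCommMonoid M] [Module ℚ≥0 M]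
    (σ : ι → Bool) (f : (ι → Bool) → M) :
    𝔼 ε : ι → Bool, f (fun i => ε i == σ i) = 𝔼 ε : ι → Bool, f ε :=
  Fintype.expect_equiv
    (Function.Involutive.toPerm (fun (ε : ι → Bool) i => ε i == σ i) fun ε => by funext i; simp)
    _ _ fun _ => rfl

lemma expect_sgn_mul_sgn {ι : Type*} [Fintype ι] [DecidableEq ι] (i j : ι) :
    𝔼 ε : ι → Bool, sgn (ε i) * sgn (ε j) = if i = j then 1 else 0 := by
  split_ifs with hij
  · simp [hij, sgn_mul_self]
  · have hflip := expect_flip (fun k => decide (k ≠ j)) fun ε : ι → Bool => sgn (ε i) * sgn (ε j)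
    have hi : sgn (decide (i ≠ j)) = 1 := by simp [sgn, hij]
    have hj : sgn (decide (j ≠ j)) = -1 := by simp [sgn]
    simp only [sgn_beq, hi, hj, mul_one, mul_neg, Finset.expect_neg_distrib] at hflip
    exact CharZero.neg_eq_self_iff.mp hflip

end Signs

section RademacherAverages

variable {X : Type*} [NormedAddCommGroup X] [NormedSpace ℂ X]
variable {ι κ : Type*} [Fintype ι] [DecidableEq ι] [Fintype κ] [DecidableEq κ]

/-- The squared Rademacher average `𝔼 ‖∑ εᵢ xᵢ‖²` of a family over an arbitrary finite index type;
`radNorm` is its square root for the index type `Fin n`. -/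
def rademacherSq (x : ι → X) : ℝ :=
  𝔼 ε : ι → Bool, ‖∑ i, sgn (ε i) • x i‖ ^ 2

/-- The squared double Rademacher average `𝔼 ‖∑ εᵢ ηⱼ xᵢⱼ‖²`, written as an iterated average so that
facts on `rademacherSq` apply to it with `ε` fixed. -/
def rademacherSq₂ (x : ι → κ → X) : ℝ :=
  𝔼 ε : ι → Bool, rademacherSq fun j => ∑ i, sgn (ε i) • x i j

lemma rademacherSq₂_eq_expect (x : ι → κ → X) :
    rademacherSq₂ x =
      𝔼 ε : ι → Bool, 𝔼 η : κ → Bool, ‖∑ i, ∑ j, (sgn (ε i) * sgn (η j)) • x i j‖ ^ 2 := by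
  simp only [rademacherSq₂, rademacherSq, Finset.smul_sum, smul_smul]
  refine Finset.expect_congr rfl fun ε _ => Finset.expect_congr rfl fun η _ => ?_
  rw [Finset.sum_comm]
  simp only [mul_comm]

lemma radNorm_eq_sqrt {n : ℕ} (x : Fin n → X) : radNorm x = √(rademacherSq x) := by
  simp [radNorm, rademacherSq, Fintype.expect_eq_sum_div_card]

lemma radNorm2_eq_sqrt {n m : ℕ} (x : Fin n → Fin m → X) : radNorm2 x = √(rademacherSq₂ x) := by
  simp only [radNorm2, rademacherSq₂_eq_expect, Fintype.expect_eq_sum_div_card, ← Finset.sum_div,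
    div_div]
  simp [pow_add, mul_comm]

lemma rademacherSq_nonneg (x : ι → X) : 0 ≤ rademacherSq x :=
  Finset.expect_nonneg fun _ _ => by positivity

lemma rademacherSq₂_nonneg (x : ι → κ → X) : 0 ≤ rademacherSq₂ x :=
  Finset.expect_nonneg fun _ _ => rademacherSq_nonneg _

lemma rademacherSq_comp_equiv {ι' : Type*} [Fintype ι'] [DecidableEq ι'] (e : ι' ≃ ι)
    (x : ι → X) : rademacherSq (x ∘ e) = rademacherSq x := by
  refine Fintype.expect_equiv (e.arrowCongr (Equiv.refl Bool)) _ _ fun ε => ?_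
  congr 2
  exact Fintype.sum_equiv e _ _ fun i => by simp

lemma rademacherSq₂_comp_equiv {ι' κ' : Type*} [Fintype ι'] [DecidableEq ι'] [Fintype κ']
    [DecidableEq κ'] (e : ι' ≃ ι) (f : κ' ≃ κ) (x : ι → κ → X) :
    rademacherSq₂ (fun i j => x (e i) (f j)) = rademacherSq₂ x := by
  refine Fintype.expect_equiv (e.arrowCongr (Equiv.refl Bool)) _ _ fun ε => ?_
  rw [← rademacherSq_comp_equiv f]
  congr 1
  funext j
  exact Fintype.sum_equiv e _ _ fun i => by simp

lemma rademacherSq_sgn_smul (σ : ι → Bool) (x : ι → X) :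
    rademacherSq (fun i => sgn (σ i) • x i) = rademacherSq x := by
  simp only [rademacherSq, smul_smul, ← sgn_beq]
  exact expect_flip σ fun ε => ‖∑ i, sgn (ε i) • x i‖ ^ 2

lemma rademacherSq_smul (c : ℂ) (x : ι → X) :
    rademacherSq (fun i => c • x i) = ‖c‖ ^ 2 * rademacherSq x := by
  simp only [rademacherSq, Finset.mul_expect, smul_comm _ c, ← Finset.smul_sum, norm_smul, mul_pow]

lemma rademacherSq_sum_le {ν : Type*} (s : Finset ν) (x : ν → ι → X) :
    rademacherSq (fun i => ∑ k ∈ s, x k i) ≤ s.card * ∑ k ∈ s, rademacherSq (x k) := by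
  simp only [rademacherSq]
  rw [← Finset.expect_sum_comm, Finset.mul_expect]
  refine Finset.expect_le_expect fun ε _ => ?_
  simp only [Finset.smul_sum]
  rw [Finset.sum_comm]
  exact (pow_le_pow_left₀ (norm_nonneg _) (norm_sum_le _ _) 2).trans sq_sum_le_card_mul_sum_sq

lemma rademacherSq_eq_sum_norm_sq {H : Type*} [NormedAddCommGroup H] [InnerProductSpace ℂ H]
    (c : ι → H) : rademacherSq c = ∑ i, ‖c i‖ ^ 2 := by
  have hexpand (ε : ι → Bool) : ((‖∑ i, sgn (ε i) • c i‖ ^ 2 : ℝ) : ℂ) =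
      ∑ i, ∑ j, (sgn (ε i) * sgn (ε j)) * inner ℂ (c i) (c j) := by
    rw [Complex.ofReal_pow, ← Complex.coe_algebraMap, ← inner_self_eq_norm_sq_to_K, sum_inner]
    simp only [inner_sum, inner_smul_left, inner_smul_right, starRingEnd_apply, star_sgn]
    exact Finset.sum_congr rfl fun i _ => Finset.sum_congr rfl fun j _ => by ring
  apply Complex.ofReal_injective
  have hcast : ((rademacherSq c : ℝ) : ℂ) =
      𝔼 ε : ι → Bool, ((‖∑ i, sgn (ε i) • c i‖ ^ 2 : ℝ) : ℂ) :=
    map_expect Complex.ofRealHom _ _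
  rw [hcast]
  simp only [hexpand, Finset.expect_sum_comm, ← Finset.expect_mul, expect_sgn_mul_sgn, ite_mul,
    one_mul, zero_mul, Finset.sum_ite_eq, Finset.mem_univ, if_true, inner_self_eq_norm_sq_to_K]
  simp

lemma rademacherSq₂_smul_eq (c : ι → ℂ) (z : κ → X) :
    rademacherSq₂ (fun i j => c i • z j) = (∑ i, ‖c i‖ ^ 2) * rademacherSq z := by
  rw [← rademacherSq_eq_sum_norm_sq]
  simp only [rademacherSq₂, smul_smul, ← Finset.sum_smul, rademacherSq_smul]
  simp only [rademacherSq, Finset.expect_mul, smul_eq_mul]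

lemma expect_rademacherSq₂_sgn_smul (x : ι → κ → X) :
    𝔼 ρ : ι × κ → Bool, rademacherSq₂ (fun i j => sgn (ρ (i, j)) • x i j) =
      rademacherSq fun p : ι × κ => x p.1 p.2 := by
  have hfixed (ε : ι → Bool) (η : κ → Bool) :
      𝔼 ρ : ι × κ → Bool, ‖∑ i, ∑ j, (sgn (ε i) * sgn (η j)) • sgn (ρ (i, j)) • x i j‖ ^ 2 =
        rademacherSq fun p : ι × κ => x p.1 p.2 := by
    rw [← rademacherSq_sgn_smul fun p : ι × κ => ε p.1 == η p.2]
    simp only [rademacherSq, Fintype.sum_prod_type, sgn_beq, smul_smul, mul_comm]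
  simp only [rademacherSq₂_eq_expect]
  rw [Finset.expect_comm]
  simp only [Finset.expect_comm (s := (Finset.univ : Finset (ι × κ → Bool))), hfixed,
    Fintype.expect_const]

end RademacherAverages

namespace PropAlphaWith

variable {X : Type*} [NormedAddCommGroup X] [NormedSpace ℂ X] {α : ℝ}
variable {ι κ : Type*} [Fintype ι] [DecidableEq ι] [Fintype κ] [DecidableEq κ]

lemma rademacherSq₂_smul_le (h : PropAlphaWith X α) (x : ι → κ → X) {t : ι → κ → ℂ}
    (ht : ∀ i j, ‖t i j‖ ≤ 1) :
    rademacherSq₂ (fun i j => t i j • x i j) ≤ α ^ 2 * rademacherSq₂ x := by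
  let e := (Fintype.equivFin ι).symm
  let f := (Fintype.equivFin κ).symm
  have key := h _ _ (fun i j => x (e i) (f j)) (fun i j => t (e i) (f j)) fun i j => ht _ _
  rw [radNorm2_eq_sqrt, radNorm2_eq_sqrt, rademacherSq₂_comp_equiv e f x,
    rademacherSq₂_comp_equiv e f fun i j => t i j • x i j] at key
  have key_sq := pow_le_pow_left₀ (Real.sqrt_nonneg _) key 2
  rwa [mul_pow, Real.sq_sqrt (rademacherSq₂_nonneg _), Real.sq_sqrt (rademacherSq₂_nonneg _)]
    at key_sq

lemma rademacherSq₂_le_of_forall_exists_smul (h : PropAlphaWith X α) {x y : ι → κ → X}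
    (hxy : ∀ i j, ∃ t : ℂ, ‖t‖ ≤ 1 ∧ y i j = t • x i j) :
    rademacherSq₂ y ≤ α ^ 2 * rademacherSq₂ x := by
  choose t ht hy using hxy
  simpa only [← hy] using h.rademacherSq₂_smul_le x ht

lemma rademacherSq_prod_le (h : PropAlphaWith X α) (x : ι → κ → X) :
    rademacherSq (fun p : ι × κ => x p.1 p.2) ≤ α ^ 2 * rademacherSq₂ x := by
  rw [← expect_rademacherSq₂_sgn_smul]
  exact Finset.expect_le Finset.univ_nonempty fun ρ _ =>
    h.rademacherSq₂_smul_le x fun i j => (norm_sgn _).le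

lemma rademacherSq₂_le_prod (h : PropAlphaWith X α) (x : ι → κ → X) :
    rademacherSq₂ x ≤ α ^ 2 * rademacherSq fun p : ι × κ => x p.1 p.2 := by
  rw [← expect_rademacherSq₂_sgn_smul, Finset.mul_expect]
  refine Finset.le_expect Finset.univ_nonempty fun ρ _ => ?_
  have key := h.rademacherSq₂_smul_le (fun i j => sgn (ρ (i, j)) • x i j)
    (t := fun i j => sgn (ρ (i, j))) fun i j => (norm_sgn _).le
  simpa only [smul_smul, sgn_mul_self, one_smul] using key

end PropAlphaWith

open MeasureTheory ProbabilityTheory Filter Topology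

section CentralLimit

lemma integral_uniformOfFintype {𝕜 Ω : Type*} [RCLike 𝕜] [Fintype Ω] [Nonempty Ω]
    [MeasurableSpace Ω] [MeasurableSingletonClass Ω] (f : Ω → 𝕜) :
    ∫ ω, f ω ∂(PMF.uniformOfFintype Ω).toMeasure = 𝔼 ω, f ω := by
  rw [PMF.integral_eq_sum, Fintype.expect_eq_sum_div_card, Finset.sum_div]
  refine Finset.sum_congr rfl fun ω _ => ?_
  simp [RCLike.real_smul_eq_coe_mul, div_eq_inv_mul]

lemma expect_exp_sum_sgn_mul_I {ι : Type*} [Fintype ι] [DecidableEq ι] (c : ι → ℝ) :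
    𝔼 ε : ι → Bool, Complex.exp ((∑ i, (sgn (ε i)).re * c i : ℝ) * Complex.I) =
      ∏ i, Complex.cos (c i) := by
  have hexp (ε : ι → Bool) : Complex.exp ((∑ i, (sgn (ε i)).re * c i : ℝ) * Complex.I) =
      ∏ i, Complex.exp (((sgn (ε i)).re * c i : ℝ) * Complex.I) := by
    rw [← Complex.exp_sum, ← Finset.sum_mul, Complex.ofReal_sum]
  have hcos (i : ι) :
      Complex.cos (c i) = ∑ b : Bool, Complex.exp (((sgn b).re * c i : ℝ) * Complex.I) / 2 := by
    simp [sgn, Complex.cos, add_div]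
  simp only [hexp, hcos]
  rw [Finset.prod_univ_sum, Fintype.piFinset_univ, Fintype.expect_eq_sum_div_card, Finset.sum_div]
  simp [Finset.prod_div_distrib]

lemma tendsto_cos_inv_sqrt_mul_pow (c : ℝ) :
    Tendsto (fun n : ℕ => Complex.cos (((√n)⁻¹ * c : ℝ)) ^ n) atTop
      (𝓝 (Complex.exp (-(c : ℂ) ^ 2 / 2))) := by
  have hm : Measurable fun b => (sgn b).re := measurable_of_finite _
  have hlim := tendsto_charFun_inv_sqrt_mul_pow (P := (PMF.uniformOfFintype Bool).toMeasure)
    hm.aemeasurable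
    (by rw [integral_uniformOfFintype, Fintype.expect_eq_sum_div_card]; simp [sgn])
    (by rw [integral_uniformOfFintype, Fintype.expect_eq_sum_div_card]; simp [sgn]) c
  refine hlim.congr fun n => ?_
  rw [charFun_apply, integral_map hm.aemeasurable (by fun_prop), integral_uniformOfFintype,
    Fintype.expect_eq_sum_div_card]
  simp [sgn, Complex.cos]

variable {E : Type*} [NormedAddCommGroup E] [InnerProductSpace ℝ E]
variable {ι : Type*} [Fintype ι] [DecidableEq ι]

/-- The value at `ω` of the normalised sum `N^{-1/2} ∑ ±bᵢ` of `N` independent copies of the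
Rademacher vector `∑ᵢ ±bᵢ`, which is asymptotically standard Gaussian. -/
def rademacherWalk (b : OrthonormalBasis ι ℝ E) (N : ℕ) (ω : Fin N × ι → Bool) : E :=
  (√N)⁻¹ • ∑ p, (sgn (ω p)).re • b p.2

variable [FiniteDimensional ℝ E] [MeasurableSpace E] [BorelSpace E]

lemma tendsto_charFun_rademacherWalk (b : OrthonormalBasis ι ℝ E) (t : E) :
    Tendsto (fun N : ℕ => charFun
      ((PMF.uniformOfFintype (Fin N × ι → Bool)).toMeasure.map (rademacherWalk b N)) t) atTop
      (𝓝 (charFun (stdGaussian E) t)) := by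
  have hwalk (N : ℕ) : charFun
      ((PMF.uniformOfFintype (Fin N × ι → Bool)).toMeasure.map (rademacherWalk b N)) t =
      ∏ i, Complex.cos (((√N)⁻¹ * inner ℝ (b i) t : ℝ)) ^ N := by
    have hinner (ω : Fin N × ι → Bool) : inner ℝ (rademacherWalk b N ω) t =
        ∑ p, (sgn (ω p)).re * ((√N)⁻¹ * inner ℝ (b p.2) t) := by
      simp only [rademacherWalk, real_inner_smul_left, sum_inner, Finset.mul_sum, mul_left_comm]
    rw [charFun_apply, integral_map (measurable_of_finite _).aemeasurable (by fun_prop),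
      integral_uniformOfFintype]
    simp only [hinner]
    rw [expect_exp_sum_sgn_mul_I fun p : Fin N × ι => (√N)⁻¹ * inner ℝ (b p.2) t,
      Fintype.prod_prod_type_right]
    simp
  have hgauss : charFun (stdGaussian E) t =
      ∏ i, Complex.exp (-((inner ℝ (b i) t : ℝ) : ℂ) ^ 2 / 2) := by
    rw [charFun_stdGaussian, ← Complex.exp_sum, ← Finset.sum_div, Finset.sum_neg_distrib,
      ← Complex.ofReal_pow, ← b.sum_sq_inner_right t]
    push_cast
    rfl
  simp only [hwalk, hgauss]
  exact tendsto_finsetProd _ fun i _ => tendsto_cos_inv_sqrt_mul_pow _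

lemma integral_stdGaussian_le_of_forall_rademacherWalk (b : OrthonormalBasis ι ℝ E) {f : E → ℝ}
    (hf : Continuous f) (hf₀ : 0 ≤ f) {C : ℝ} (hC₀ : 0 ≤ C)
    (hC : ∀ N : ℕ, 0 < N → 𝔼 ω, f (rademacherWalk b N ω) ≤ C) :
    ∫ γ, f γ ∂(stdGaussian E) ≤ C := by
  let ν : ℕ → ProbabilityMeasure E := fun N =>
    ⟨(PMF.uniformOfFintype (Fin N × ι → Bool)).toMeasure.map (rademacherWalk b N),
      Measure.isProbabilityMeasure_map (measurable_of_finite _).aemeasurable⟩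
  have hlim : Tendsto ν atTop (𝓝 ⟨stdGaussian E, inferInstance⟩) :=
    ProbabilityMeasure.tendsto_iff_tendsto_charFun.2 (tendsto_charFun_rademacherWalk b)
  have hwalk (N : ℕ) (hN : 0 < N) : ∫⁻ γ, ENNReal.ofReal (f γ) ∂(ν N) ≤ ENNReal.ofReal C := by
    rw [ProbabilityMeasure.coe_mk, lintegral_map (by fun_prop) (measurable_of_finite _),
      ← ofReal_integral_eq_lintegral_ofReal Integrable.of_finite
        (Eventually.of_forall fun ω => hf₀ (rademacherWalk b N ω)), integral_uniformOfFintype]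
    exact ENNReal.ofReal_le_ofReal (hC N hN)
  rw [integral_eq_lintegral_of_nonneg_ae (Eventually.of_forall hf₀) (by fun_prop)]
  refine ENNReal.toReal_le_of_le_ofReal hC₀ ?_
  calc ∫⁻ γ, ENNReal.ofReal (f γ) ∂(stdGaussian E)
      ≤ liminf (fun N => ∫⁻ γ, ENNReal.ofReal (f γ) ∂(ν N)) atTop :=
        lintegral_le_liminf_lintegral_of_forall_isOpen_measure_le_liminf_measure hf hf₀
          fun _ hG => ProbabilityMeasure.le_liminf_measure_open_of_tendsto hlim hG
    _ ≤ ENNReal.ofReal C := by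
        refine liminf_le_of_frequently_le' (Eventually.frequently ?_)
        filter_upwards [eventually_gt_atTop 0] with N hN using hwalk N hN

end CentralLimit

section Gaussian

variable {X : Type*} [NormedAddCommGroup X] [NormedSpace ℂ X]
variable {ι : Type*} [Fintype ι]

lemma integral_abs_gaussianReal : ∫ x, |x| ∂(gaussianReal 0 1) = √(2 / Real.pi) := by
  have hhalf : ∫ x in Set.Ioi (0 : ℝ), x * Real.exp (-x ^ 2 / 2) = 1 := by
    have hΓ := integral_rpow_mul_exp_neg_mul_rpow (p := 2) (q := 1) (b := 1 / 2)
      (by norm_num) (by norm_num) (by norm_num)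
    norm_num at hΓ
    refine (setIntegral_congr_fun measurableSet_Ioi fun x _ => ?_).trans hΓ
    ring_nf
  rw [integral_gaussianReal_eq_integral_smul one_ne_zero]
  have hpdf (x : ℝ) : gaussianPDFReal 0 1 x • |x| =
      (√(2 * Real.pi))⁻¹ * (|x| * Real.exp (-|x| ^ 2 / 2)) := by
    simp only [gaussianPDFReal, NNReal.coe_one, mul_one, sub_zero, smul_eq_mul, sq_abs]
    ring
  simp only [hpdf, integral_const_mul]
  rw [integral_comp_abs (f := fun x => x * Real.exp (-x ^ 2 / 2)), hhalf, ← Real.sqrt_inv, mul_one]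
  rw [← Real.sqrt_sq (zero_le_two (α := ℝ)), ← Real.sqrt_mul (by positivity)]
  congr 1
  field_simp
  norm_num

section Jensen

variable {Ω : Type*} [MeasurableSpace Ω] {μ : Measure Ω} {f : ι → Ω → ℝ}

lemma memLp_sum_smul_const {Y : Type*} [NormedAddCommGroup Y] [NormedSpace ℝ Y] {p : ENNReal}
    (hf : ∀ i, MemLp (f i) p μ) (y : ι → Y) : MemLp (fun ω => ∑ i, f i ω • y i) p μ :=
  memLp_finsetSum _ fun i _ =>
    (ContinuousLinearMap.toSpanSingleton ℝ (y i)).comp_memLp' (hf i)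

lemma norm_sum_integral_smul_sq_le [IsProbabilityMeasure μ] {Y : Type*} [NormedAddCommGroup Y]
    [NormedSpace ℝ Y] (hf : ∀ i, MemLp (f i) 2 μ) (y : ι → Y) :
    ‖∑ i, (∫ ω, f i ω ∂μ) • y i‖ ^ 2 ≤ ∫ ω, ‖∑ i, f i ω • y i‖ ^ 2 ∂μ := by
  let L := Fintype.linearCombination ℝ y
  have hconvex : ConvexOn ℝ Set.univ fun v => ‖L v‖ ^ 2 :=
    ((convexOn_norm convex_univ).comp_linearMap L).pow (fun _ _ => norm_nonneg _) 2
  have hcont : Continuous fun v => ‖L v‖ ^ 2 := L.continuous_of_finiteDimensional.norm.pow 2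
  have hint (i : ι) : Integrable (f i) μ := (hf i).integrable one_le_two
  have hjensen := hconvex.map_integral_le hcont.continuousOn isClosed_univ (by simp)
    (Integrable.of_eval hint) ((memLp_sum_smul_const hf y).integrable_norm_pow two_ne_zero)
  have hmean : ∫ ω, (fun i => f i ω) ∂μ = fun i => ∫ ω, f i ω ∂μ := funext (eval_integral hint)
  rwa [hmean] at hjensen

variable [DecidableEq ι]

lemma integral_rademacherSq_smul (hf : ∀ i, MemLp (f i) 2 μ) (z : ι → X) :
    ∫ ω, rademacherSq (fun i => f i ω • z i) ∂μ =
      𝔼 ε : ι → Bool, ∫ ω, ‖∑ i, f i ω • sgn (ε i) • z i‖ ^ 2 ∂μ := by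
  simp only [rademacherSq, Fintype.expect_eq_sum_div_card, smul_comm (sgn _)]
  rw [integral_div, integral_finsetSum _ fun ε _ =>
    (memLp_sum_smul_const hf _).integrable_norm_pow two_ne_zero]

lemma rademacherSq_integral_abs_smul_le [IsProbabilityMeasure μ] (hf : ∀ i, MemLp (f i) 2 μ)
    (z : ι → X) :
    rademacherSq (fun i => (∫ ω, |f i ω| ∂μ) • z i) ≤
      ∫ ω, rademacherSq (fun i => f i ω • z i) ∂μ := by
  have habs (ω : Ω) : rademacherSq (fun i => f i ω • z i) =
      rademacherSq fun i => |f i ω| • z i := by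
    rw [← rademacherSq_sgn_smul (fun i => decide (0 ≤ f i ω))]
    congr 1
    funext i
    by_cases hi : 0 ≤ f i ω
    · simp [sgn, hi, abs_of_nonneg hi]
    · simp [sgn, hi, abs_of_neg (not_le.mp hi)]
  have hf_abs (i : ι) : MemLp (fun ω => |f i ω|) 2 μ := (hf i).abs
  simp only [habs]
  rw [integral_rademacherSq_smul hf_abs]
  refine Finset.expect_le_expect fun ε _ => ?_
  simpa only [smul_comm (sgn _)] using
    norm_sum_integral_smul_sq_le hf_abs fun i => sgn (ε i) • z i

end Jensen

/-- The squared Gaussian average `𝔼 ‖∑ gᵢ zᵢ‖²` with independent real standard Gaussian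
coefficients. Its invariance under rotations is what Rademacher averages lack. -/
def gaussianSq (z : ι → X) : ℝ :=
  ∫ γ, ‖∑ i, γ i • z i‖ ^ 2 ∂(Measure.pi fun _ : ι => gaussianReal 0 1)

lemma gaussianSq_orthonormalBasis {E : Type*} [NormedAddCommGroup E] [InnerProductSpace ℝ E]
    [FiniteDimensional ℝ E] [MeasurableSpace E] [BorelSpace E] (b : OrthonormalBasis ι ℝ E)
    (T : E →L[ℝ] X) : gaussianSq (fun i => T (b i)) = ∫ γ, ‖T γ‖ ^ 2 ∂(stdGaussian E) := by
  rw [stdGaussian_eq_map_pi_orthonormalBasis b,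
    integral_map (Measurable.aemeasurable (by fun_prop)) (by fun_prop)]
  simp only [gaussianSq, map_sum, map_smul]

lemma gaussianSq_sgn_smul (σ : ι → Bool) (z : ι → X) :
    gaussianSq (fun i => sgn (σ i) • z i) = gaussianSq z := by
  have hflip (b : Bool) : MeasurePreserving (fun x => (sgn b).re * x)
      (gaussianReal 0 1) (gaussianReal 0 1) := by
    refine ⟨by fun_prop, ?_⟩
    rw [gaussianReal_map_const_mul]
    cases b <;> simp [sgn]
  have hpi := measurePreserving_pi (fun _ : ι => gaussianReal 0 1) (fun _ => gaussianReal 0 1)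
    fun i => hflip (σ i)
  conv_rhs => rw [gaussianSq, ← hpi.map_eq]
  rw [gaussianSq, integral_map hpi.aemeasurable (Continuous.aestronglyMeasurable (by fun_prop))]
  simp only [mul_comm (sgn _).re, mul_smul, re_sgn_smul]

variable [DecidableEq ι]

lemma two_div_pi_mul_rademacherSq_le_gaussianSq (z : ι → X) :
    2 / Real.pi * rademacherSq z ≤ gaussianSq z := by
  have heval (i : ι) := measurePreserving_eval (fun _ : ι => gaussianReal 0 1) i
  have hmemLp (i : ι) : MemLp (fun γ : ι → ℝ => γ i) 2 (Measure.pi fun _ => gaussianReal 0 1) :=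
    (memLp_id_gaussianReal 2).comp_measurePreserving (heval i)
  have hmean (i : ι) :
      ∫ γ : ι → ℝ, |γ i| ∂(Measure.pi fun _ => gaussianReal 0 1) = √(2 / Real.pi) := by
    rw [← integral_abs_gaussianReal]
    nth_rw 2 [← (heval i).map_eq]
    exact (integral_map (heval i).aemeasurable (by fun_prop)).symm
  have key := rademacherSq_integral_abs_smul_le hmemLp z
  rw [integral_rademacherSq_smul hmemLp] at key
  simp only [hmean] at key
  calc 2 / Real.pi * rademacherSq z
      = rademacherSq fun i => √(2 / Real.pi) • z i := by
        simp only [← Complex.coe_smul, rademacherSq_smul, Complex.norm_real, Real.norm_eq_abs,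
          sq_abs, Real.sq_sqrt (div_nonneg zero_le_two Real.pi_pos.le)]
    _ ≤ 𝔼 ε : ι → Bool, gaussianSq fun i => sgn (ε i) • z i := key
    _ = gaussianSq z := by simp only [gaussianSq_sgn_smul, Fintype.expect_const]

namespace PropAlphaWith

variable {α : ℝ} {E : Type*} [NormedAddCommGroup E] [InnerProductSpace ℝ E]
  [FiniteDimensional ℝ E]

lemma integral_norm_sq_stdGaussian_le [MeasurableSpace E] [BorelSpace E]
    (h : PropAlphaWith X α) (b : OrthonormalBasis ι ℝ E) (T : E →L[ℝ] X) :
    ∫ γ, ‖T γ‖ ^ 2 ∂(stdGaussian E) ≤ α ^ 2 * rademacherSq fun i => T (b i) := by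
  refine integral_stdGaussian_le_of_forall_rademacherWalk b (by fun_prop)
    (fun γ => sq_nonneg ‖T γ‖) (mul_nonneg (sq_nonneg α) (rademacherSq_nonneg _)) fun N hN => ?_
  have hwalk (ω : Fin N × ι → Bool) : ‖T (rademacherWalk b N ω)‖ ^ 2 =
      (N : ℝ)⁻¹ * ‖∑ p, sgn (ω p) • T (b p.2)‖ ^ 2 := by
    simp only [rademacherWalk, map_smul, map_sum, re_sgn_smul]
    rw [norm_smul, mul_pow, Real.norm_eq_abs, sq_abs, inv_pow, Real.sq_sqrt (Nat.cast_nonneg N)]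
  calc 𝔼 ω, ‖T (rademacherWalk b N ω)‖ ^ 2
      = (N : ℝ)⁻¹ * rademacherSq fun p : Fin N × ι => T (b p.2) := by
        simp only [hwalk, rademacherSq, Finset.mul_expect]
    _ ≤ (N : ℝ)⁻¹ * (α ^ 2 * rademacherSq₂ fun (_ : Fin N) i => (1 : ℂ) • T (b i)) := by
        gcongr
        simpa only [one_smul] using h.rademacherSq_prod_le fun (_ : Fin N) i => T (b i)
    _ = α ^ 2 * rademacherSq fun i => T (b i) := by
        rw [rademacherSq₂_smul_eq fun _ => 1]
        simp only [norm_one, one_pow, Finset.sum_const, Finset.card_univ, Fintype.card_fin,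
          nsmul_eq_mul, mul_one]
        field_simp

lemma rademacherSq_orthonormalBasis_le {κ : Type*} [Fintype κ] [DecidableEq κ]
    (h : PropAlphaWith X α) (b : OrthonormalBasis ι ℝ E) (b' : OrthonormalBasis κ ℝ E)
    (T : E →L[ℝ] X) :
    rademacherSq (fun i => T (b i)) ≤ Real.pi / 2 * α ^ 2 * rademacherSq fun i => T (b' i) := by
  borelize E
  have key := (two_div_pi_mul_rademacherSq_le_gaussianSq fun i => T (b i)).trans
    ((gaussianSq_orthonormalBasis b T).trans_le (h.integral_norm_sq_stdGaussian_le b' T))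
  calc rademacherSq (fun i => T (b i))
      = Real.pi / 2 * (2 / Real.pi * rademacherSq fun i => T (b i)) := by field_simp
    _ ≤ Real.pi / 2 * (α ^ 2 * rademacherSq fun i => T (b' i)) := by gcongr
    _ = _ := (mul_assoc _ _ _).symm

end PropAlphaWith

end Gaussian

section ScalarMatrices

variable {X : Type*} [NormedAddCommGroup X] [NormedSpace ℂ X]
variable {ι : Type*} [Fintype ι] [DecidableEq ι]

lemma exists_real_orthonormalBasis_euclideanSpace_complex (ι : Type*) [Fintype ι]
    [DecidableEq ι] :
    ∃ b : OrthonormalBasis (Fin 2 × ι) ℝ (EuclideanSpace ℂ ι),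
      ∀ p, b p = EuclideanSpace.single p.2 (![1, Complex.I] p.1) := by
  refine ⟨(Pi.orthonormalBasis fun _ : ι => Complex.orthonormalBasisOneI).reindex
    ((Equiv.sigmaEquivProd ι (Fin 2)).trans (Equiv.prodComm ι (Fin 2))), fun p => ?_⟩
  simp [Pi.orthonormalBasis_apply]

lemma matOpNorm_le_one_of_mem_unitaryGroup {u : Matrix ι ι ℂ}
    (hu : u ∈ Matrix.unitaryGroup ι ℂ) : matOpNorm u ≤ 1 :=
  (Unitary.linearIsometryEquiv
    ⟨Matrix.toEuclideanCLM (𝕜 := ℂ) u, Unitary.map_mem _ hu⟩).toLinearIsometry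
      |>.norm_toContinuousLinearMap_le

lemma exists_sum_four_unitaryGroup (a : Matrix ι ι ℂ) :
    ∃ (u : Fin 4 → Matrix.unitaryGroup ι ℂ) (c : Fin 4 → ℂ),
      a = ∑ k, c k • (u k : Matrix ι ι ℂ) ∧ ∀ k, ‖c k‖ ≤ matOpNorm a / 2 := by
  let e := Matrix.toEuclideanCLM (n := ι) (𝕜 := ℂ)
  obtain ⟨u, c, ha, hc⟩ := CStarAlgebra.exists_sum_four_unitary (e a)
  refine ⟨fun k => ⟨e.symm (u k), Unitary.map_mem e.symm (u k).2⟩, c, ?_, hc⟩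
  simpa only [map_sum, map_smul, StarAlgEquiv.symm_apply_apply] using! congrArg e.symm ha

namespace PropAlphaWith

variable {α : ℝ}

lemma rademacherSq_unitary_le (h : PropAlphaWith X α) (u : Matrix.unitaryGroup ι ℂ) (z : ι → X) :
    rademacherSq (fun l => ∑ m, (u : Matrix ι ι ℂ) l m • z m) ≤
      Real.pi / 2 * α ^ 6 * rademacherSq z := by
  obtain ⟨b, hb⟩ := exists_real_orthonormalBasis_euclideanSpace_complex ι
  let T : EuclideanSpace ℂ ι →L[ℂ] X := ∑ m, (EuclideanSpace.proj m).smulRight (z m)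
  let U : EuclideanSpace ℂ ι ≃ₗᵢ[ℂ] EuclideanSpace ℂ ι :=
    Unitary.linearIsometryEquiv ⟨Matrix.toEuclideanCLM (𝕜 := ℂ) (u : Matrix ι ι ℂ).transpose,
      Unitary.map_mem _ (Matrix.transpose_mem_unitaryGroup_iff.2 u.2)⟩
  let V : EuclideanSpace ℂ ι ≃ₗᵢ[ℝ] EuclideanSpace ℂ ι :=
    { U.toLinearEquiv.restrictScalars ℝ with norm_map' := U.norm_map }
  have hT (p : Fin 2 × ι) : T (b p) = ![1, Complex.I] p.1 • z p.2 := by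
    simp [T, hb]
  have hTV (p : Fin 2 × ι) :
      T ((b.map V) p) = ![1, Complex.I] p.1 • ∑ m, (u : Matrix ι ι ℂ) p.2 m • z m := by
    have hV (γ : EuclideanSpace ℂ ι) (m : ι) : V γ m = ∑ l, (u : Matrix ι ι ℂ) l m * γ l := rfl
    have hVb (m : ι) : V (b p) m = (u : Matrix ι ι ℂ) p.2 m * ![1, Complex.I] p.1 := by
      simp [hV, hb]
    simp [T, hVb, Finset.smul_sum, mul_comm, mul_smul]
  have hdouble (y : ι → X) :
      rademacherSq₂ (fun c l => ![1, Complex.I] c • y l) = 2 * rademacherSq y := by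
    rw [rademacherSq₂_smul_eq, Fin.sum_univ_two]
    norm_num
  have hrotate := h.rademacherSq_orthonormalBasis_le (b.map V) b (T.restrictScalars ℝ)
  simp only [ContinuousLinearMap.coe_restrictScalars', hT, hTV] at hrotate
  have hlower := h.rademacherSq₂_le_prod fun c l =>
    ![1, Complex.I] c • ∑ m, (u : Matrix ι ι ℂ) l m • z m
  have hupper := h.rademacherSq_prod_le fun c l => ![1, Complex.I] c • z l
  rw [hdouble] at hlower hupper
  calc rademacherSq (fun l => ∑ m, (u : Matrix ι ι ℂ) l m • z m)
      ≤ 2⁻¹ * (α ^ 2 * (Real.pi / 2 * α ^ 2 * (α ^ 2 * (2 * rademacherSq z)))) := by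
        rw [← mul_le_mul_iff_right₀ (zero_lt_two (α := ℝ)), mul_inv_cancel_left₀ two_ne_zero]
        refine hlower.trans ?_
        gcongr
        refine hrotate.trans ?_
        gcongr
    _ = Real.pi / 2 * α ^ 6 * rademacherSq z := by ring

lemma rademacherSq_matrix_le (h : PropAlphaWith X α) (a : Matrix ι ι ℂ) (z : ι → X) :
    rademacherSq (fun l => ∑ m, a l m • z m) ≤
      2 * Real.pi * α ^ 6 * matOpNorm a ^ 2 * rademacherSq z := by
  obtain ⟨u, c, ha, hc⟩ := exists_sum_four_unitaryGroup a
  have hterm (k : Fin 4) :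
      rademacherSq (fun l => c k • ∑ m, (u k : Matrix ι ι ℂ) l m • z m) ≤
        (matOpNorm a / 2) ^ 2 * (Real.pi / 2 * α ^ 6 * rademacherSq z) := by
    rw [rademacherSq_smul]
    have := rademacherSq_nonneg fun l => ∑ m, (u k : Matrix ι ι ℂ) l m • z m
    gcongr
    · exact hc k
    · exact h.rademacherSq_unitary_le (u k) z
  have hsum : (fun l => ∑ m, a l m • z m) =
      fun l => ∑ k, c k • ∑ m, (u k : Matrix ι ι ℂ) l m • z m := by
    funext l
    simp only [Finset.smul_sum, smul_smul]
    rw [Finset.sum_comm]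
    conv_lhs => rw [ha]
    simp only [Matrix.sum_apply, Matrix.smul_apply, smul_eq_mul, Finset.sum_smul]
  calc rademacherSq (fun l => ∑ m, a l m • z m)
      ≤ 4 * ∑ k, rademacherSq fun l => c k • ∑ m, (u k : Matrix ι ι ℂ) l m • z m := by
        rw [hsum]
        exact rademacherSq_sum_le Finset.univ _
    _ ≤ 4 * ∑ _ : Fin 4, (matOpNorm a / 2) ^ 2 * (Real.pi / 2 * α ^ 6 * rademacherSq z) := by
        gcongr with k
        exact hterm k
    _ = 2 * Real.pi * α ^ 6 * matOpNorm a ^ 2 * rademacherSq z := by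
        rw [Finset.sum_const, Finset.card_univ, Fintype.card_fin, nsmul_eq_mul]
        push_cast
        ring

end PropAlphaWith

end ScalarMatrices

section FlatUnitary

lemma exists_flat_unitary (ι : Type*) [Fintype ι] [DecidableEq ι] :
    ∃ u ∈ Matrix.unitaryGroup ι ℂ, ∀ i j, ‖u i j‖ = (√(Fintype.card ι))⁻¹ := by
  rcases isEmpty_or_nonempty ι with hι | hι
  · exact ⟨1, one_mem _, fun i => hι.elim i⟩
  let n := Fintype.card ι
  have : NeZero n := ⟨Fintype.card_ne_zero⟩
  have hn : (√(n : ℝ) : ℂ)⁻¹ * (√(n : ℝ) : ℂ)⁻¹ * n = 1 := by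
    rw [← mul_inv, ← Complex.ofReal_mul, Real.mul_self_sqrt n.cast_nonneg, Complex.ofReal_natCast,
      inv_mul_cancel₀ (NeZero.ne _)]
  let e : ι ≃ ZMod n := Fintype.equivOfCardEq (ZMod.card n).symm
  let χ : AddChar (ZMod n) ℂ := ZMod.stdAddChar
  have hχ (a : ZMod n) : ‖χ a‖ = 1 := AddChar.norm_apply _ _
  have horth (i j : ι) :
      ∑ l, star (χ (e l * e i)) * χ (e l * e j) = if i = j then (n : ℂ) else 0 := by
    have hterm (l : ι) : star (χ (e l * e i)) * χ (e l * e j) = χ (e l * (e j - e i)) := by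
      rw [mul_sub, AddChar.map_sub_eq_div, div_eq_mul_inv, mul_comm, ← AddChar.map_neg_eq_inv,
        AddChar.map_neg_eq_conj]
      rfl
    simp only [hterm]
    rw [e.sum_comp fun a => χ (a * (e j - e i)),
      AddChar.sum_mulShift _ (ZMod.isPrimitive_stdAddChar n)]
    simp only [sub_eq_zero, e.apply_eq_iff_eq, eq_comm (a := j), ZMod.card, Nat.cast_ite,
      Nat.cast_zero]
  refine ⟨Matrix.of fun i j => (√(n : ℝ) : ℂ)⁻¹ * χ (e i * e j),
    Matrix.mem_unitaryGroup_iff'.2 ?_, fun i j => by simp [hχ, n]⟩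
  ext i j
  calc _ = (√(n : ℝ) : ℂ)⁻¹ * (√(n : ℝ) : ℂ)⁻¹ * ∑ l, star (χ (e l * e i)) * χ (e l * e j) := by
        simp only [Matrix.mul_apply, Matrix.star_apply, Matrix.of_apply, star_mul', Finset.mul_sum,
          star_inv₀, Complex.star_def, Complex.conj_ofReal]
        exact Finset.sum_congr rfl fun l _ => by ring
    _ = _ := by
        rw [horth, Matrix.one_apply]
        split_ifs
        · exact hn
        · exact mul_zero _

end FlatUnitary

section BlockMatrices

variable {κ : Type*} {ι : κ → Type*} [∀ k, DecidableEq (ι k)]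

/-- The matrix units of `⨁ₖ Mₖ(ℂ)`, indexed by pairs from the disjoint union of the index types of
the blocks and equal to `0` for indices from different blocks. -/
def blockUnit [DecidableEq κ] (p q : Σ k, ι k) : ∀ k, Matrix (ι k) (ι k) ℂ :=
  Matrix.blockDiag' (Matrix.single p q 1)

lemma blockUnit_eq_zero [DecidableEq κ] {p q : Σ k, ι k} (hpq : p.1 ≠ q.1) : blockUnit p q = 0 := by
  funext k
  ext i j
  refine Matrix.single_apply_of_ne _ _ _ _ _ fun h => hpq ?_
  rw [h.1, h.2]

variable [∀ k, Fintype (ι k)]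

/-- The matrix `a` with its rows multiplied by the signs `ε` and its columns by the signs `η`. -/
def signTwist (ε η : (Σ k, ι k) → Bool) (a : ∀ k, Matrix (ι k) (ι k) ℂ) (k : κ) :
    Matrix (ι k) (ι k) ℂ :=
  Matrix.diagonal (fun i => sgn (ε ⟨k, i⟩)) * a k * Matrix.diagonal fun j => sgn (η ⟨k, j⟩)

lemma diagonal_sgn_mem_unitaryGroup {ν : Type*} [Fintype ν] [DecidableEq ν] (σ : ν → Bool) :
    Matrix.diagonal (fun i => sgn (σ i)) ∈ Matrix.unitaryGroup ν ℂ := by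
  rw [Matrix.mem_unitaryGroup_iff, Matrix.star_eq_conjTranspose, Matrix.diagonal_conjTranspose,
    Matrix.diagonal_mul_diagonal]
  simp only [Pi.star_apply, star_sgn, sgn_mul_self, Matrix.diagonal_one]

lemma signTwist_mem_unitaryGroup (ε η : (Σ k, ι k) → Bool) {a : ∀ k, Matrix (ι k) (ι k) ℂ}
    {k : κ} (ha : a k ∈ Matrix.unitaryGroup (ι k) ℂ) :
    signTwist ε η a k ∈ Matrix.unitaryGroup (ι k) ℂ :=
  mul_mem (mul_mem (diagonal_sgn_mem_unitaryGroup _) ha) (diagonal_sgn_mem_unitaryGroup _)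

variable [Fintype κ] [DecidableEq κ]

lemma sum_smul_blockUnit_apply (c : (Σ k, ι k) → (Σ k, ι k) → ℂ) (k : κ) (i j : ι k) :
    (∑ p, ∑ q, c p q • blockUnit p q) k i j = c ⟨k, i⟩ ⟨k, j⟩ := by
  simp only [Finset.sum_apply, Matrix.sum_apply, Pi.smul_apply, Matrix.smul_apply, blockUnit,
    Matrix.blockDiag'_apply, Matrix.single_apply, smul_eq_mul, mul_ite, mul_one, mul_zero, ite_and]
  simp only [Finset.sum_ite_irrel, Finset.sum_ite_eq', Finset.sum_const_zero, Finset.mem_univ,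
    if_true]

lemma blockUnit_mul (p q : Σ k, ι k) (a : ∀ k, Matrix (ι k) (ι k) ℂ) :
    blockUnit p q * a = ∑ r, Matrix.blockDiagonal' a q r • blockUnit p r := by
  obtain ⟨m, l⟩ := q
  funext k
  ext i j
  simp only [blockUnit, Pi.mul_apply, Matrix.mul_apply, Finset.sum_apply, Matrix.sum_apply,
    Pi.smul_apply, Matrix.smul_apply, Matrix.blockDiag'_apply, Matrix.single_apply, smul_eq_mul,
    ite_mul, mul_ite, one_mul, mul_one, zero_mul, mul_zero]
  rcases eq_or_ne m k with rfl | hmk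
  · simp [ite_and, Matrix.blockDiagonal'_apply_eq]
  · simp [hmk, ite_and, Matrix.blockDiagonal'_apply_ne]

lemma signTwist_eq_sum (ε η : (Σ k, ι k) → Bool) (a : ∀ k, Matrix (ι k) (ι k) ℂ) :
    signTwist ε η a =
      ∑ p, ∑ q, (sgn (ε p) * sgn (η q)) • Matrix.blockDiagonal' a p q • blockUnit p q := by
  funext k
  ext i j
  simp only [smul_smul, sum_smul_blockUnit_apply, signTwist, Matrix.mul_diagonal,
    Matrix.diagonal_mul, Matrix.blockDiagonal'_apply_eq]
  ring

lemma matOpNorm_blockDiagonal'_le (a : ∀ k, Matrix (ι k) (ι k) ℂ) :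
    matOpNorm (Matrix.blockDiagonal' a) ≤ ⨆ k, matOpNorm (a k) := by
  have hS : 0 ≤ ⨆ k, matOpNorm (a k) := Real.iSup_nonneg fun k => norm_nonneg _
  refine ContinuousLinearMap.opNorm_le_bound _ hS fun v =>
    (sq_le_sq₀ (norm_nonneg _) (by positivity)).1 ?_
  rw [mul_pow, EuclideanSpace.norm_sq_eq, EuclideanSpace.norm_sq_eq, Fintype.sum_sigma,
    Fintype.sum_sigma, Finset.mul_sum]
  refine Finset.sum_le_sum fun k _ => ?_
  let vk : EuclideanSpace ℂ (ι k) := WithLp.toLp 2 fun i => v ⟨k, i⟩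
  have hrow (i : ι k) : Matrix.toEuclideanCLM (𝕜 := ℂ) (Matrix.blockDiagonal' a) v ⟨k, i⟩ =
      Matrix.toEuclideanCLM (𝕜 := ℂ) (a k) vk i := by
    simp only [Matrix.ofLp_toEuclideanCLM, Matrix.mulVec, dotProduct, Fintype.sum_sigma, vk]
    rw [Finset.sum_eq_single k]
    · simp only [Matrix.blockDiagonal'_apply_eq]
    · intro l _ hl
      simp only [Matrix.blockDiagonal'_apply_ne _ _ _ hl.symm, zero_mul, Finset.sum_const_zero]
    · simp
  have hblock : ‖Matrix.toEuclideanCLM (𝕜 := ℂ) (a k) vk‖ ≤ (⨆ k, matOpNorm (a k)) * ‖vk‖ :=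
    (Matrix.toEuclideanCLM (𝕜 := ℂ) (a k)).le_of_opNorm_le
      (le_ciSup (f := fun k => matOpNorm (a k)) (Set.finite_range _).bddAbove k) vk
  have hblock_sq := pow_le_pow_left₀ (norm_nonneg _) hblock 2
  rw [mul_pow, EuclideanSpace.norm_sq_eq, EuclideanSpace.norm_sq_eq] at hblock_sq
  simpa only [hrow] using hblock_sq

end BlockMatrices

section Amplification

variable {X : Type*} [NormedAddCommGroup X] [NormedSpace ℂ X]
variable {κ : Type*} {ι : κ → Type*} [∀ k, Fintype (ι k)] [∀ k, DecidableEq (ι k)]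
variable {ν : Type*} [Fintype ν] [DecidableEq ν]

/-- The norm of `[aₗₘ] ∈ M_ν(⨁ₖ Mₖ(ℂ))`, computed through the identification of this algebra with
`⨁ₖ M_{ν × k}(ℂ)`. -/
def blockMatrixNorm (a : ν → ν → ∀ k, Matrix (ι k) (ι k) ℂ) : ℝ :=
  ⨆ k, matOpNorm (Matrix.of fun p q : ν × ι k => a p.1 q.1 k p.2 q.2)

lemma blockMatrixNorm_nonneg (a : ν → ν → ∀ k, Matrix (ι k) (ι k) ℂ) : 0 ≤ blockMatrixNorm a :=
  Real.iSup_nonneg fun _ => norm_nonneg _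

lemma PropAlphaWith.rademacherSq₂_blockMatrix_le [Fintype κ] [DecidableEq κ] {α : ℝ}
    (h : PropAlphaWith X α) (a : ν → ν → ∀ k, Matrix (ι k) (ι k) ℂ) (z : (Σ k, ι k) → ν → X) :
    rademacherSq₂ (fun q l => ∑ m, ∑ r, Matrix.blockDiagonal' (a l m) q r • z r m) ≤
      2 * Real.pi * α ^ 10 * blockMatrixNorm a ^ 2 * rademacherSq₂ z := by
  let z' : (Σ k, ι k) → ν → X := fun q l => ∑ m, ∑ r, Matrix.blockDiagonal' (a l m) q r • z r m
  let A : Matrix (Σ k, ν × ι k) (Σ k, ν × ι k) ℂ :=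
    Matrix.blockDiagonal' fun k => Matrix.of fun p q : ν × ι k => a p.1 q.1 k p.2 q.2
  let e : (Σ k, ν × ι k) ≃ (Σ k, ι k) × ν :=
    { toFun := fun s => (⟨s.1, s.2.2⟩, s.2.1)
      invFun := fun p => ⟨p.1.1, (p.2, p.1.2)⟩
      left_inv := fun _ => rfl
      right_inv := fun _ => rfl }
  let Z : (Σ k, ν × ι k) → X := fun s => z (e s).1 (e s).2
  have hz : (rademacherSq fun p : (Σ k, ι k) × ν => z p.1 p.2) = rademacherSq Z :=
    (rademacherSq_comp_equiv e _).symm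
  have hentry (s t : Σ k, ν × ι k) :
      A s t = Matrix.blockDiagonal' (a (e s).2 (e t).2) (e s).1 (e t).1 := by
    obtain ⟨k, l, i⟩ := s
    obtain ⟨k', m, j⟩ := t
    rcases eq_or_ne k k' with rfl | hk
    · simp [A, e, Matrix.blockDiagonal'_apply_eq]
    · simp [A, e, Matrix.blockDiagonal'_apply_ne _ _ _ hk]
  have hz' : (rademacherSq fun p : (Σ k, ι k) × ν => z' p.1 p.2) =
      rademacherSq fun s => ∑ t, A s t • Z t := by
    rw [← rademacherSq_comp_equiv e]
    congr 1
    funext s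
    simp only [hentry, Z, Function.comp_apply, z']
    rw [e.sum_comp fun p => Matrix.blockDiagonal' (a (e s).2 p.2) (e s).1 p.1 • z p.1 p.2,
      Fintype.sum_prod_type_right]
  calc rademacherSq₂ z' ≤ α ^ 2 * rademacherSq fun p : (Σ k, ι k) × ν => z' p.1 p.2 :=
        h.rademacherSq₂_le_prod z'
    _ ≤ α ^ 2 * (2 * Real.pi * α ^ 6 * matOpNorm A ^ 2 * rademacherSq Z) := by
        rw [hz']
        gcongr
        exact h.rademacherSq_matrix_le A Z
    _ ≤ α ^ 2 * (2 * Real.pi * α ^ 6 * blockMatrixNorm a ^ 2 * (α ^ 2 * rademacherSq₂ z)) := by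
        have hA : matOpNorm A ≤ blockMatrixNorm a := matOpNorm_blockDiagonal'_le _
        have hA₀ : 0 ≤ matOpNorm A := norm_nonneg _
        have hZ : rademacherSq Z ≤ α ^ 2 * rademacherSq₂ z := hz ▸ h.rademacherSq_prod_le z
        have hZ₀ : 0 ≤ rademacherSq Z := rademacherSq_nonneg Z
        gcongr
    _ = 2 * Real.pi * α ^ 10 * blockMatrixNorm a ^ 2 * rademacherSq₂ z := by ring

lemma expect_rademacherSq₂_map_sum {ι κ : Type*} [Fintype ι] [DecidableEq ι] [Fintype κ]
    [DecidableEq κ] (b : ι → κ → X →L[ℂ] X) (y : ν → X) :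
    𝔼 δ : ν → Bool, rademacherSq₂ (fun p q => b p q (∑ l, sgn (δ l) • y l)) =
      𝔼 ε : ι → Bool, rademacherSq₂ fun q l => ∑ p, sgn (ε p) • b p q (y l) := by
  simp only [rademacherSq₂, rademacherSq]
  rw [Finset.expect_comm]
  refine Finset.expect_congr rfl fun ε _ => ?_
  rw [Finset.expect_comm]
  refine Finset.expect_congr rfl fun η _ => Finset.expect_congr rfl fun δ _ => ?_
  simp only [map_sum, map_smul, Finset.smul_sum]
  rw [Finset.sum_comm_cycle]
  congr 2
  refine Finset.sum_congr rfl fun l _ => Finset.sum_congr rfl fun q _ =>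
    Finset.sum_congr rfl fun p _ => ?_
  rw [smul_comm (sgn (ε p)), smul_comm (sgn (η q))]

end Amplification

section Homomorphisms

variable {X : Type*} [NormedAddCommGroup X] [NormedSpace ℂ X]
variable {κ : Type*} {ι : κ → Type*} [∀ k, Fintype (ι k)] [∀ k, DecidableEq (ι k)]
variable (w : (∀ k, Matrix (ι k) (ι k) ℂ) →ₙₐ[ℂ] (X →L[ℂ] X))

/-- The image under `w` of a matrix unit, divided by the square root of the block size: up to
unimodular factors, these are the summands of `w u` for a unitary `u` with entries of constant
modulus in each block. -/
def scaledUnit [DecidableEq κ] (p q : Σ k, ι k) : X →L[ℂ] X :=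
  ((√(Fintype.card (ι p.1)))⁻¹ : ℂ) • w (blockUnit p q)

variable {w}

lemma norm_sq_apply_le_of_mem_unitaryGroup {C : ℝ} (hC : ∀ a, ‖w a‖ ≤ C * ⨆ k, matOpNorm (a k))
    {u : ∀ k, Matrix (ι k) (ι k) ℂ} (hu : ∀ k, u k ∈ Matrix.unitaryGroup (ι k) ℂ) (x : X) :
    ‖w u x‖ ^ 2 ≤ C ^ 2 * ‖x‖ ^ 2 := by
  have hsup : ⨆ k, matOpNorm (u k) ≤ 1 :=
    Real.iSup_le (fun k => matOpNorm_le_one_of_mem_unitaryGroup (hu k)) zero_le_one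
  have hsup₀ : 0 ≤ ⨆ k, matOpNorm (u k) := Real.iSup_nonneg fun k => norm_nonneg _
  have hw : ‖w u‖ ≤ |C| := calc
    ‖w u‖ ≤ C * ⨆ k, matOpNorm (u k) := hC u
    _ ≤ |C| * 1 := by gcongr; exact le_abs_self C
    _ = |C| := mul_one _
  rw [← sq_abs C, ← mul_pow]
  gcongr
  exact (w u).le_of_opNorm_le hw x

variable [Fintype κ] [DecidableEq κ]

lemma scaledUnit_apply_apply (p q : Σ k, ι k) (a : ∀ k, Matrix (ι k) (ι k) ℂ) (x : X) :
    scaledUnit w p q (w a x) = ∑ r, Matrix.blockDiagonal' a q r • scaledUnit w p r x := by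
  have hmul : w (blockUnit p q) (w a x) = w (blockUnit p q * a) x := by rw [map_mul]; rfl
  simp only [scaledUnit, smul_apply, hmul, blockUnit_mul, map_sum, map_smul, sum_apply,
    Finset.smul_sum]
  exact Finset.sum_congr rfl fun r _ => smul_comm _ _ _

lemma apply_signTwist (ε η : (Σ k, ι k) → Bool) (a : ∀ k, Matrix (ι k) (ι k) ℂ) (x : X) :
    w (signTwist ε η a) x = ∑ p, ∑ q,
      (sgn (ε p) * sgn (η q)) • Matrix.blockDiagonal' a p q • w (blockUnit p q) x := by
  simp only [signTwist_eq_sum, map_sum, map_smul, sum_apply, smul_apply]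

lemma rademacherSq₂_smul_blockUnit_le_norm_sq {C : ℝ}
    (hC : ∀ a, ‖w a‖ ≤ C * ⨆ k, matOpNorm (a k)) {u : ∀ k, Matrix (ι k) (ι k) ℂ}
    (hu : ∀ k, u k ∈ Matrix.unitaryGroup (ι k) ℂ) (x : X) :
    rademacherSq₂ (fun p q => Matrix.blockDiagonal' u p q • w (blockUnit p q) x) ≤
      C ^ 2 * ‖x‖ ^ 2 := by
  rw [rademacherSq₂_eq_expect]
  refine Finset.expect_le Finset.univ_nonempty fun ε _ =>
    Finset.expect_le Finset.univ_nonempty fun η _ => ?_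
  rw [← apply_signTwist]
  exact norm_sq_apply_le_of_mem_unitaryGroup hC
    (fun k => signTwist_mem_unitaryGroup ε η (hu k)) x

lemma norm_sq_apply_one_le_rademacherSq₂_smul_blockUnit {C : ℝ}
    (hC : ∀ a, ‖w a‖ ≤ C * ⨆ k, matOpNorm (a k)) {u : ∀ k, Matrix (ι k) (ι k) ℂ}
    (hu : ∀ k, u k ∈ Matrix.unitaryGroup (ι k) ℂ) (x : X) :
    ‖w 1 x‖ ^ 2 ≤
      C ^ 2 * rademacherSq₂ fun p q => Matrix.blockDiagonal' u p q • w (blockUnit p q) x := by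
  rw [rademacherSq₂_eq_expect, Finset.mul_expect]
  refine Finset.le_expect Finset.univ_nonempty fun ε _ => ?_
  rw [Finset.mul_expect]
  refine Finset.le_expect Finset.univ_nonempty fun η _ => ?_
  have hv (k : κ) := signTwist_mem_unitaryGroup ε η (hu k)
  have hinv : w 1 x = w (star (signTwist ε η u)) (w (signTwist ε η u) x) := by
    have hone : star (signTwist ε η u) * signTwist ε η u = 1 :=
      funext fun k => Unitary.star_mul_self_of_mem (hv k)
    rw [← hone, map_mul]
    rfl
  rw [← apply_signTwist, hinv]
  exact norm_sq_apply_le_of_mem_unitaryGroup hC (fun k => Unitary.star_mem (hv k)) _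

namespace PropAlphaWith

variable {α : ℝ} {ν : Type*} [Fintype ν] [DecidableEq ν]

lemma rademacherSq₂_smul_blockUnit_le (h : PropAlphaWith X α) {c d : (Σ k, ι k) → (Σ k, ι k) → ℂ}
    (hcd : ∀ k (i j : ι k), ‖c ⟨k, i⟩ ⟨k, j⟩‖ = ‖d ⟨k, i⟩ ⟨k, j⟩‖) (x : X) :
    rademacherSq₂ (fun p q => c p q • w (blockUnit p q) x) ≤
      α ^ 2 * rademacherSq₂ fun p q => d p q • w (blockUnit p q) x := by
  refine h.rademacherSq₂_le_of_forall_exists_smul fun p q => ?_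
  obtain ⟨k, i⟩ := p
  obtain ⟨k', j⟩ := q
  rcases eq_or_ne k k' with rfl | hk
  · refine ⟨c ⟨k, i⟩ ⟨k, j⟩ / d ⟨k, i⟩ ⟨k, j⟩, ?_, ?_⟩
    · rw [norm_div, hcd]
      exact div_self_le_one _
    · rw [smul_smul, div_mul_cancel_of_imp fun hd => norm_eq_zero.1 (by rw [hcd, hd, norm_zero])]
  · exact ⟨0, by simp, by simp [blockUnit_eq_zero (p := ⟨k, i⟩) (q := ⟨k', j⟩) hk]⟩

lemma rademacherSq₂_scaledUnit_le (h : PropAlphaWith X α) {C : ℝ}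
    (hC : ∀ a, ‖w a‖ ≤ C * ⨆ k, matOpNorm (a k)) (x : X) :
    rademacherSq₂ (fun p q => scaledUnit w p q x) ≤ α ^ 2 * (C ^ 2 * ‖x‖ ^ 2) := by
  choose u hu hflat using fun k => exists_flat_unitary (ι k)
  refine (h.rademacherSq₂_smul_blockUnit_le (d := Matrix.blockDiagonal' u)
    (fun k i j => ?_) x).trans ?_
  · simp [Matrix.blockDiagonal'_apply_eq, abs_of_nonneg (Real.sqrt_nonneg _), hflat]
  · gcongr
    exact rademacherSq₂_smul_blockUnit_le_norm_sq hC hu x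

lemma norm_sq_apply_one_le (h : PropAlphaWith X α) {C : ℝ}
    (hC : ∀ a, ‖w a‖ ≤ C * ⨆ k, matOpNorm (a k)) (x : X) :
    ‖w 1 x‖ ^ 2 ≤ C ^ 2 * (α ^ 2 * rademacherSq₂ fun p q => scaledUnit w p q x) := by
  choose u hu hflat using fun k => exists_flat_unitary (ι k)
  refine (norm_sq_apply_one_le_rademacherSq₂_smul_blockUnit hC hu x).trans ?_
  gcongr
  refine h.rademacherSq₂_smul_blockUnit_le (fun k i j => ?_) x
  simp [Matrix.blockDiagonal'_apply_eq, abs_of_nonneg (Real.sqrt_nonneg _), hflat]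

lemma rademacherSq₂_sum_scaledUnit_le (h : PropAlphaWith X α)
    (a : ν → ν → ∀ k, Matrix (ι k) (ι k) ℂ) (x : ν → X) (ε : (Σ k, ι k) → Bool) :
    rademacherSq₂ (fun q l => ∑ p, sgn (ε p) • scaledUnit w p q (∑ m, w (a l m) (x m))) ≤
      2 * Real.pi * α ^ 10 * blockMatrixNorm a ^ 2 *
        rademacherSq₂ fun q l => ∑ p, sgn (ε p) • scaledUnit w p q (x l) := by
  have hsum (q : Σ k, ι k) (l : ν) :
      ∑ p, sgn (ε p) • scaledUnit w p q (∑ m, w (a l m) (x m)) =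
        ∑ m, ∑ r, Matrix.blockDiagonal' (a l m) q r •
          ∑ p, sgn (ε p) • scaledUnit w p r (x m) := by
    simp only [map_sum, scaledUnit_apply_apply, Finset.smul_sum, smul_comm (sgn _)]
    rw [Finset.sum_comm]
    exact Finset.sum_congr rfl fun m _ => Finset.sum_comm
  simp only [hsum]
  exact h.rademacherSq₂_blockMatrix_le a fun q l => ∑ p, sgn (ε p) • scaledUnit w p q (x l)

end PropAlphaWith

end Homomorphisms

lemma PropAlphaWith.rademacherSq_hom_le {X : Type*} [NormedAddCommGroup X] [NormedSpace ℂ X]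
    {α : ℝ} (h : PropAlphaWith X α) {κ : Type*} [Finite κ] {ι : κ → Type*}
    [∀ k, Fintype (ι k)] [∀ k, DecidableEq (ι k)] {ν : Type*} [Fintype ν] [DecidableEq ν]
    {w : (∀ k, Matrix (ι k) (ι k) ℂ) →ₙₐ[ℂ] (X →L[ℂ] X)} {C : ℝ}
    (hC : ∀ a, ‖w a‖ ≤ C * ⨆ k, matOpNorm (a k)) (a : ν → ν → ∀ k, Matrix (ι k) (ι k) ℂ)
    (x : ν → X) :
    rademacherSq (fun l => ∑ m, w (a l m) (x m)) ≤
      2 * Real.pi * α ^ 14 * C ^ 4 * blockMatrixNorm a ^ 2 * rademacherSq x := by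
  classical
  cases nonempty_fintype κ
  let b (p q : Σ k, ι k) : X →L[ℂ] X := scaledUnit w p q
  let y (l : ν) : X := ∑ m, w (a l m) (x m)
  have hone (δ : ν → Bool) : w 1 (∑ l, sgn (δ l) • y l) = ∑ l, sgn (δ l) • y l := by
    have hfix (v : ∀ k, Matrix (ι k) (ι k) ℂ) (x : X) : w 1 (w v x) = w v x := by
      rw [← mul_apply_eq_comp, ← map_mul, one_mul]
    simp only [map_sum, map_smul, y, hfix]
  have hlower : rademacherSq y ≤
      C ^ 2 * (α ^ 2 * 𝔼 δ : ν → Bool, rademacherSq₂ fun p q => b p q (∑ l, sgn (δ l) • y l)) := by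
    simp only [rademacherSq, Finset.mul_expect]
    refine Finset.expect_le_expect fun δ _ => ?_
    simpa only [hone] using h.norm_sq_apply_one_le hC (∑ l, sgn (δ l) • y l)
  have hamplify :
      𝔼 ε : (Σ k, ι k) → Bool, rademacherSq₂ (fun q l => ∑ p, sgn (ε p) • b p q (y l)) ≤
        2 * Real.pi * α ^ 10 * blockMatrixNorm a ^ 2 *
          𝔼 ε : (Σ k, ι k) → Bool, rademacherSq₂ fun q l => ∑ p, sgn (ε p) • b p q (x l) := by
    rw [Finset.mul_expect]
    exact Finset.expect_le_expect fun ε _ => h.rademacherSq₂_sum_scaledUnit_le a x ε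
  have hupper : 𝔼 δ : ν → Bool, rademacherSq₂ (fun p q => b p q (∑ l, sgn (δ l) • x l)) ≤
      α ^ 2 * (C ^ 2 * rademacherSq x) := by
    simp only [rademacherSq, Finset.mul_expect]
    exact Finset.expect_le_expect fun δ _ => h.rademacherSq₂_scaledUnit_le hC _
  rw [expect_rademacherSq₂_map_sum] at hlower hupper
  calc rademacherSq y
      ≤ _ := hlower
    _ ≤ C ^ 2 * (α ^ 2 * (2 * Real.pi * α ^ 10 * blockMatrixNorm a ^ 2 *
          (α ^ 2 * (C ^ 2 * rademacherSq x)))) := by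
        gcongr
        refine hamplify.trans ?_
        gcongr
    _ = _ := by ring

theorem finiteDim_hom_matricially_R_bounded_general {X : Type*} [NormedAddCommGroup X]
    [NormedSpace ℂ X] {α : ℝ} (hα : 0 ≤ α) (h : PropAlphaWith X α) {κ : Type*} [Finite κ]
    {ι : κ → Type*} [∀ k, Fintype (ι k)] [∀ k, DecidableEq (ι k)]
    (w : (∀ k, Matrix (ι k) (ι k) ℂ) →ₙₐ[ℂ] (X →L[ℂ] X)) {C : ℝ}
    (hC : ∀ a, ‖w a‖ ≤ C * ⨆ k, matOpNorm (a k)) {n : ℕ}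
    (a : Fin n → Fin n → ∀ k, Matrix (ι k) (ι k) ℂ) (x : Fin n → X) :
    radNorm (fun i => ∑ j, w (a i j) (x j)) ≤
      √(2 * Real.pi) * α ^ 7 * C ^ 2 * blockMatrixNorm a * radNorm x := by
  have hS := blockMatrixNorm_nonneg a
  rw [radNorm_eq_sqrt, radNorm_eq_sqrt, Real.sqrt_le_iff]
  refine ⟨by positivity, (h.rademacherSq_hom_le hC a x).trans_eq ?_⟩
  simp only [mul_pow, Real.sq_sqrt (rademacherSq_nonneg x), Real.sq_sqrt Real.two_pi_pos.le]
  ring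

/-- Theorem 5.1 for finite dimensional C*-algebras: on a Banach space with
property (α), every bounded unital homomorphism `w : ⊕_k M_{n_k}(ℂ) → B(X)` is
matricially R-bounded, with `‖w‖_{mat,R} ≤ K ‖w‖²`. The norm of a matrix
`[a_{ij}] ∈ M_n(A)` is the maximum over `k` of the operator norms of the
`n·n_k × n·n_k` block matrices. -/
theorem finiteDim_hom_matricially_R_bounded (α : ℝ) (hα : 1 ≤ α) :
    ∃ K : ℝ, 1 ≤ K ∧
      ∀ (X : Type u) (_ : NormedAddCommGroup X) (_ : NormedSpace ℂ X),
      PropAlphaWith X α →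
      ∀ (N : ℕ) (nk : Fin N → ℕ) (_ : ∀ k, 0 < nk k)
        (w : (∀ k, Matrix (Fin (nk k)) (Fin (nk k)) ℂ) → (X →L[ℂ] X)),
        (∀ a b, w (a + b) = w a + w b) →
        (∀ (c : ℂ) a, w (c • a) = c • w a) →
        (∀ a b, w (a * b) = w a * w b) →
        (w 1 = 1) →
      ∀ Cw : ℝ,
        (∀ a, ‖w a‖ ≤ Cw * ⨆ k, matOpNorm (a k)) →
        (∀ C' : ℝ, (∀ a, ‖w a‖ ≤ C' * ⨆ k, matOpNorm (a k)) → Cw ≤ C') →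
      ∀ (n : ℕ) (a : Fin n → Fin n → ∀ k, Matrix (Fin (nk k)) (Fin (nk k)) ℂ)
        (x : Fin n → X),
        radNorm (fun i => ∑ j, w (a i j) (x j)) ≤
          K * Cw ^ 2 *
            (⨆ k : Fin N, matOpNorm (Matrix.of
              fun (p q : Fin n × Fin (nk k)) => a p.1 q.1 k p.2 q.2)) *
            radNorm x := by
  have hK : 1 ≤ √(2 * Real.pi) * α ^ 7 :=
    one_le_mul_of_one_le_of_one_le
      (Real.one_le_sqrt.2 (by linarith [Real.pi_gt_three])) (one_le_pow₀ hα)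
  refine ⟨_, hK, fun X _ _ h N nk _ w hadd hsmul hmul _ Cw hCw _ n a x => ?_⟩
  let w' : (∀ k, Matrix (Fin (nk k)) (Fin (nk k)) ℂ) →ₙₐ[ℂ] (X →L[ℂ] X) :=
    { toFun := w
      map_smul' := hsmul
      map_zero' := by simpa using hsmul 0 0
      map_add' := hadd
      map_mul' := hmul }
  exact finiteDim_hom_matricially_R_bounded_general (zero_le_one.trans hα) h w' hCw a x

end
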